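/- arXiv:2410.02213 — 9 statements merged into one kernel-verified Lean document; each statement's English description precedes it below -/
import Mathlib

section
/- Let G be a finite simple graph with vertex set V and edge set E, and let ε : V → {1, −1} ⊆ ℂ. The operators ½(id + ε_v A_v) for v ∈ V pairwise commute, and their composition over all v ∈ V equals 2^{−|V|} Σ_{c ∈ 𝔽₂^V} ε(c) X(c, δc), where ε(c) = ∏_{v : c(v)=1} ε_v. -/
open Finset

variable {V : Type*} [Fintype V] [DecidableEq V]

/-- The boundary map `∂ : 𝔽₂^E → 𝔽₂^V` of a simple graph, sending the indicator of an edge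
to the sum of the indicators of its endpoints. -/
def bd (G : SimpleGraph V) [Fintype G.edgeSet] :
    (G.edgeSet → ZMod 2) →ₗ[ZMod 2] (V → ZMod 2) where
  toFun x := fun v => ∑ e : G.edgeSet, if v ∈ (e : Sym2 V) then x e else 0
  map_add' x y := by
    funext v
    simp only [Pi.add_apply]
    rw [← Finset.sum_add_distrib]
    exact Finset.sum_congr rfl fun e _ => by split <;> simp
  map_smul' r x := by
    funext v
    simp only [Pi.smul_apply, smul_eq_mul, RingHom.id_apply]
    rw [Finset.mul_sum]
    exact Finset.sum_congr rfl fun e _ => by split <;> simp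

/-- The coboundary map `δ : 𝔽₂^V → 𝔽₂^E` of a simple graph (the transpose of `∂`):
`(δ c) e = c u + c v` where `u, v` are the endpoints of `e`. -/
def cobd (G : SimpleGraph V) [Fintype G.edgeSet] :
    (V → ZMod 2) →ₗ[ZMod 2] (G.edgeSet → ZMod 2) where
  toFun c := fun e => ∑ v : V, if v ∈ (e : Sym2 V) then c v else 0
  map_add' x y := by
    funext e
    simp only [Pi.add_apply]
    rw [← Finset.sum_add_distrib]
    exact Finset.sum_congr rfl fun v _ => by split <;> simp
  map_smul' r x := by
    funext e
    simp only [Pi.smul_apply, smul_eq_mul, RingHom.id_apply]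
    rw [Finset.mul_sum]
    exact Finset.sum_congr rfl fun v _ => by split <;> simp

/-- The Hilbert space of the vertex and edge qubits: complex functions on
`𝔽₂^V × 𝔽₂^E` classical configurations. -/
abbrev Hsp (V E : Type*) : Type _ := ((V → ZMod 2) × (E → ZMod 2)) → ℂ

/-- The Pauli-X operator `X(a,b)`, acting by translation:
`(X(a,b) F)(s,t) = F(s + a, t + b)`. -/
def PX {V E : Type*} (a : V → ZMod 2) (b : E → ZMod 2) : Module.End ℂ (Hsp V E) where
  toFun F := fun p => F (p.1 + a, p.2 + b)
  map_add' _ _ := rfl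
  map_smul' _ _ := rfl

/-- The Gauss's law operator `A_v = X(1_v, δ 1_v)`. -/
def gaussA {V : Type*} [Fintype V] [DecidableEq V] (G : SimpleGraph V)
    [Fintype G.edgeSet] (v : V) : Module.End ℂ (Hsp V G.edgeSet) :=
  PX (fun w => if w = v then 1 else 0) (cobd G (fun w => if w = v then 1 else 0))

theorem PX_mul_aux {V E : Type*} (a a' : V → ZMod 2) (b b' : E → ZMod 2) :
    PX a b * PX a' b' = PX (a + a') (b + b') := by
  ext1 F
  funext p
  simp [PX, Module.End.mul_apply, add_assoc]

theorem PX_zero_aux {V E : Type*} : PX (0 : V → ZMod 2) (0 : E → ZMod 2) = 1 := by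
  ext1 F
  funext p
  simp [PX]

theorem gauss_list_aux {V : Type*} [Fintype V] [DecidableEq V]
    (G : SimpleGraph V) [Fintype G.edgeSet] (ε : V → ℂ) (l : List V) (hl : l.Nodup) :
    (l.map (fun v => (2⁻¹ : ℂ) • (1 + ε v • gaussA G v))).prod
      = ((2 : ℂ) ^ l.length)⁻¹ •
          ∑ s ∈ l.toFinset.powerset,
            (∏ v ∈ s, ε v) • PX (fun w => if w ∈ s then (1 : ZMod 2) else 0)
              (cobd G (fun w => if w ∈ s then (1 : ZMod 2) else 0)) := by
  induction l with
  | nil =>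
    have h : (fun _ : V => (0 : ZMod 2)) = 0 := rfl
    simp [h, PX_zero_aux]
  | cons v l ih =>
    obtain ⟨hv, hl⟩ := List.nodup_cons.1 hl
    have hv' : v ∉ l.toFinset := by simpa using hv
    rw [List.map_cons, List.prod_cons, ih hl, List.toFinset_cons,
      Finset.sum_powerset_insert hv', List.length_cons, pow_succ', mul_inv,
      smul_mul_smul_comm]
    congr 1
    rw [add_mul, one_mul, Finset.mul_sum]
    congr 1
    refine Finset.sum_congr rfl fun s hs => ?_
    have hvs : v ∉ s := fun h => hv' (Finset.mem_powerset.1 hs h)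
    rw [Finset.prod_insert hvs, smul_mul_smul_comm, gaussA, PX_mul_aux, ← map_add]
    have : (fun w => if w = v then (1 : ZMod 2) else 0) + (fun w => if w ∈ s then 1 else 0)
        = fun w => if w ∈ insert v s then 1 else 0 := by
      funext w
      by_cases h : w = v
      · subst h; simp [hvs]
      · simp [h]
    rw [this]

/-- For measurement outcomes `ε : V → {1, −1} ⊆ ℂ`, the projectors
`½(id + ε_v A_v)` pairwise commute and their composition over all vertices equals
`2^{−|V|} Σ_{c ∈ 𝔽₂^V} ε(c) X(c, δc)`, where `ε(c) = ∏_{v : c v = 1} ε v`. -/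
theorem gauss_projectors_prod {V : Type*} [Fintype V] [DecidableEq V]
    (G : SimpleGraph V) [Fintype G.edgeSet]
    (ε : V → ℂ) (hε : ∀ v, ε v = 1 ∨ ε v = -1) :
    (∀ v w : V,
      ((2⁻¹ : ℂ) • (1 + ε v • gaussA G v)) * ((2⁻¹ : ℂ) • (1 + ε w • gaussA G w))
        = ((2⁻¹ : ℂ) • (1 + ε w • gaussA G w)) * ((2⁻¹ : ℂ) • (1 + ε v • gaussA G v))) ∧
    (Finset.univ.toList.map (fun v => (2⁻¹ : ℂ) • (1 + ε v • gaussA G v))).prod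
      = ((2 : ℂ) ^ Fintype.card V)⁻¹ •
          ∑ c : V → ZMod 2,
            (∏ v ∈ Finset.univ.filter (fun v => c v = 1), ε v) • PX c (cobd G c) := by
  constructor
  · intro v w
    have h : gaussA G v * gaussA G w = gaussA G w * gaussA G v := by
      rw [gaussA, gaussA, PX_mul_aux, PX_mul_aux, add_comm, add_comm (cobd G _)]
    have h1 : Commute (gaussA G v) (gaussA G w) := h
    have h2 : Commute (1 + ε v • gaussA G v) (1 + ε w • gaussA G w) :=
      ((Commute.one_left _).add_left
        ((Commute.one_right _).add_right ((h1.smul_left _).smul_right _)))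
    exact ((h2.smul_left _).smul_right _)
  · rw [gauss_list_aux G ε _ (Finset.nodup_toList _), Finset.length_toList, Finset.card_univ,
      Finset.toList_toFinset, Finset.powerset_univ]
    congr 1
    have key : ∀ x : ZMod 2, (if x = 1 then (1 : ZMod 2) else 0) = x := by decide
    refine Finset.sum_bij' (fun s _ => fun w => if w ∈ s then (1 : ZMod 2) else 0)
      (fun c _ => Finset.univ.filter (fun v => c v = 1)) ?_ ?_ ?_ ?_ ?_
    · intros; simp
    · intros; simp
    · intro s _; ext w; simp
    · intro c _; funext w; simp [key]
    · intro s _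
      congr 1
      refine Finset.prod_congr ?_ fun _ _ => rfl
      ext w; simp
end

section
/- Let G be a finite connected simple graph with nonempty vertex set V and edge set E, let ψ ∈ H_V, let ε : V → {1, −1}, set σ = ∏_{v∈V} ε_v, and let z ∈ 𝔽₂^E. Then the vector ⟨z|_E ( ∏_{v∈V} ½(id + ε_v A_v) )(ψ ⊗ |0⟩_E) ∈ H_V equals: (i) the zero vector, if z is not in the range of the coboundary map δ; (ii) 2^{−|V|} · ε(c') · ( X_V(c') ψ + σ · X_V(c' + 1_V) ψ ), for any c' ∈ 𝔽₂^V with δc' = z, where 1_V is the all-ones vector — equivalently 2^{−|V|} ε(c') X_V(c') (id + σ L_V) ψ with L_V = X_V(1_V). In particular, up to the Pauli byproduct operator X_V(c') and normalization, the procedure projects ψ onto the σ-eigenspace of the logical operator L_V, with σ equal to the product of the Gauss's law measurement outcomes ε_v. -/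
open Finset

variable {V : Type*} [Fintype V] [DecidableEq V]

/-- The Hilbert space of the vertex qubits alone. -/
abbrev HV (V : Type*) : Type _ := (V → ZMod 2) → ℂ

/-- The Pauli-X operator `X_V(a)` on the vertex qubits: `(X_V(a) f)(s) = f(s + a)`. -/
def PXV {V : Type*} (a : V → ZMod 2) : Module.End ℂ (HV V) where
  toFun f := fun s => f (s + a)
  map_add' _ _ := rfl
  map_smul' _ _ := rfl

/-- `ψ ⊗ |0⟩_E`: the state `ψ` on the vertex qubits tensored with all edge qubits in
state `|0⟩`. -/
def tens {V E : Type*} [Fintype E] (ψ : HV V) : Hsp V E :=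
  fun p => if p.2 = 0 then ψ p.1 else 0

/-- The contraction `⟨z|_E` reading out the edge qubits in the configuration `z`. -/
def contr {V E : Type*} (z : E → ZMod 2) (F : Hsp V E) : HV V :=
  fun a => F (a, z)

def indS {V : Type*} [DecidableEq V] (S : Finset V) : V → ZMod 2 := fun w => if w ∈ S then 1 else 0

lemma cobd_adj {V : Type*} [Fintype V] [DecidableEq V] (G : SimpleGraph V) [Fintype G.edgeSet]
    (c : V → ZMod 2) (u v : V) (h : G.Adj u v) : cobd G c ⟨s(u, v), h⟩ = c u + c v := by
  have hne := h.ne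
  change (∑ w : V, if w ∈ s(u, v) then c w else 0) = _
  rw [← Finset.sum_filter]
  have : (Finset.univ.filter (fun w => w ∈ s(u, v))) = {u, v} := by
    ext w; simp
  rw [this, Finset.sum_pair hne]

lemma cobd_ker {V : Type*} [Fintype V] [DecidableEq V] (G : SimpleGraph V) [Fintype G.edgeSet]
    (hG : G.Connected) (c : V → ZMod 2) (h : cobd G c = 0) (u v : V) : c u = c v := by
  obtain ⟨p⟩ := hG.preconnected u v
  induction p with
  | nil => rfl
  | cons hadj _ ih =>
    rw [← ih]
    have := cobd_adj G c _ _ hadj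
    rw [h] at this
    exact CharTwo.add_eq_zero.mp this.symm

lemma cobd_one {V : Type*} [Fintype V] [DecidableEq V] (G : SimpleGraph V) [Fintype G.edgeSet] :
    cobd G (fun _ => 1) = 0 := by
  funext ⟨e, he⟩
  induction e using Sym2.ind with
  | _ u v =>
    rw [cobd_adj G _ u v he]
    exact CharTwo.add_self_eq_zero _

lemma prod_expand {V : Type*} [Fintype V] [DecidableEq V] (G : SimpleGraph V)
    [Fintype G.edgeSet] (ε : V → ℂ) (F : Hsp V G.edgeSet) (l : List V) (hl : l.Nodup) :
    ∀ p, ((l.map (fun v => (2⁻¹ : ℂ) • (1 + ε v • gaussA G v))).prod F) p =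
      ((2 : ℂ) ^ l.length)⁻¹ * ∑ S ∈ l.toFinset.powerset,
        (∏ v ∈ S, ε v) * F (p.1 + indS S, p.2 + cobd G (indS S)) := by
  induction l with
  | nil =>
    intro p
    have : indS (∅ : Finset V) = 0 := by funext w; simp [indS]
    simp [this]
  | cons v l ih =>
    intro p
    rw [List.nodup_cons] at hl
    have ih := ih hl.2
    have hv : v ∉ l.toFinset := by simpa using hl.1
    rw [List.map_cons, List.prod_cons, List.toFinset_cons, Finset.sum_powerset_insert hv]
    have key : ∀ P : Module.End ℂ (Hsp V G.edgeSet),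
        (((2⁻¹ : ℂ) • (1 + ε v • gaussA G v)) * P) F p =
        2⁻¹ * (P F p + ε v * P F (p.1 + (fun w => if w = v then 1 else 0),
          p.2 + cobd G (fun w => if w = v then 1 else 0))) := fun P => rfl
    rw [key, ih, ih]
    have h2 : ∀ S ∈ l.toFinset.powerset,
        (∏ v ∈ insert v S, ε v) * F (p.1 + indS (insert v S), p.2 + cobd G (indS (insert v S)))
        = ε v * ((∏ v ∈ S, ε v) * F (p.1 + (fun w => if w = v then 1 else 0) + indS S,
          p.2 + cobd G (fun w => if w = v then 1 else 0) + cobd G (indS S))) := by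
      intro S hS
      have hvS : v ∉ S := fun h => hv (Finset.mem_powerset.mp hS h)
      have : indS (insert v S) = (fun w => if w = v then 1 else 0) + indS S := by
        funext w
        by_cases hw : w = v
        · subst hw; simp [indS, hvS]
        · simp [indS, hw]
      rw [Finset.prod_insert hvS, this, map_add, add_assoc, add_assoc, mul_assoc]
    rw [Finset.sum_congr rfl h2, ← Finset.mul_sum, List.length_cons, pow_succ, mul_inv]
    ring

lemma contr_expand {V : Type*} [Fintype V] [DecidableEq V] (G : SimpleGraph V)
    [Fintype G.edgeSet] (ε : V → ℂ) (ψ : HV V) (z : G.edgeSet → ZMod 2) (a : V → ZMod 2) :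
    contr z ((Finset.univ.toList.map (fun v => (2⁻¹ : ℂ) • (1 + ε v • gaussA G v))).prod
          (tens ψ)) a = ((2 : ℂ) ^ Fintype.card V)⁻¹ * ∑ S : Finset V,
        if cobd G (indS S) = z then (∏ v ∈ S, ε v) * ψ (a + indS S) else 0 := by
  unfold contr
  rw [prod_expand G ε _ _ (Finset.nodup_toList _), Finset.toList_toFinset, Finset.powerset_univ,
    Finset.length_toList, Finset.card_univ]
  congr 1
  refine Finset.sum_congr rfl fun S _ => ?_
  have : (z + cobd G (indS S) = 0) ↔ cobd G (indS S) = z := by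
    constructor
    · intro h
      funext e
      exact (CharTwo.add_eq_zero.mp (congrFun h e)).symm
    · rintro h
      rw [h]; funext e; exact CharTwo.add_self_eq_zero _
  simp only [tens, this, mul_ite, mul_zero]

/-- **Gauging measurement.** For a connected graph `G`, outcomes
`ε : V → {±1}` with `σ = ∏_v ε_v`, and any `z ∈ 𝔽₂^E`, the vector
`⟨z|_E (∏_v ½(id + ε_v A_v)) (ψ ⊗ |0⟩_E)` is (i) zero if `z` is not in the range of the
coboundary map `δ`, and (ii) equals
`2^{−|V|} ε(c') (X_V(c') ψ + σ X_V(c' + 1_V) ψ)` for any `c'` with `δ c' = z`. -/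
theorem gauging_measurement {V : Type*} [Fintype V] [DecidableEq V]
    (G : SimpleGraph V) [Fintype G.edgeSet] (hG : G.Connected)
    (ε : V → ℂ) (hε : ∀ v, ε v = 1 ∨ ε v = -1)
    (ψ : HV V) (z : G.edgeSet → ZMod 2) :
    (z ∉ LinearMap.range (cobd G) →
      contr z
        ((Finset.univ.toList.map (fun v => (2⁻¹ : ℂ) • (1 + ε v • gaussA G v))).prod
          (tens ψ)) = 0) ∧
    (∀ c' : V → ZMod 2, cobd G c' = z →
      contr z
        ((Finset.univ.toList.map (fun v => (2⁻¹ : ℂ) • (1 + ε v • gaussA G v))).prod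
          (tens ψ))
        = ((2 : ℂ) ^ Fintype.card V)⁻¹ •
            ((∏ v ∈ Finset.univ.filter (fun v => c' v = 1), ε v) •
              (PXV c' ψ + (∏ v, ε v) • PXV (c' + fun _ => 1) ψ))) := by
  have z2 : ∀ x : ZMod 2, x = 0 ∨ x = 1 := by decide
  refine ⟨fun hz => ?_, fun c' hc => ?_⟩
  · funext a
    rw [contr_expand]
    rw [Finset.sum_eq_zero, mul_zero]; · rfl
    intro S _
    rw [if_neg]
    exact fun h => hz ⟨_, h⟩
  · funext a
    rw [contr_expand]
    set S₀ := Finset.univ.filter (fun v => c' v = 1) with hS₀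
    have i0 : indS S₀ = c' := by
      funext w
      rcases z2 (c' w) with h | h <;> simp [indS, hS₀, h]
    have i1 : indS S₀ᶜ = c' + fun _ => 1 := by
      funext w
      rcases z2 (c' w) with h | h <;> simp [indS, hS₀, h]
      exact (CharTwo.add_self_eq_zero (1 : ZMod 2)).symm
    obtain ⟨v₀⟩ := hG.nonempty
    have hne : S₀ ≠ S₀ᶜ := by
      intro h
      have := Finset.ext_iff.mp h v₀
      simp at this
    have hset : (Finset.univ.filter (fun S : Finset V => cobd G (indS S) = z)) = {S₀, S₀ᶜ} := by
      ext S
      simp only [Finset.mem_filter, Finset.mem_univ, true_and, Finset.mem_insert,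
        Finset.mem_singleton]
      constructor
      · intro h
        have hk : cobd G (indS S - c') = 0 := by rw [map_sub, h, hc, sub_self]
        have hk := cobd_ker G hG _ hk
        have hmem : ∀ w, w ∈ S ↔ indS S w = 1 := by intro w; simp [indS]
        rcases z2 ((indS S - c') v₀) with h0 | h1
        · left
          ext w
          have := hk w v₀
          rw [h0, Pi.sub_apply, sub_eq_zero] at this
          rw [hmem, this]; simp [hS₀]
        · right
          ext w
          have := hk w v₀
          rw [h1, Pi.sub_apply, sub_eq_iff_eq_add] at this
          rw [hmem, this]; simp [hS₀]
          rcases z2 (c' w) with h | h <;> simp [h]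
      · rintro (rfl | rfl)
        · rw [i0, hc]
        · rw [i1, map_add, cobd_one, hc, add_zero]
    rw [← Finset.sum_filter, hset, Finset.sum_pair hne, i0, i1]
    have hsq : (∏ v ∈ S₀, ε v) * (∏ v ∈ S₀, ε v) = 1 := by
      rw [← Finset.prod_mul_distrib]
      refine Finset.prod_eq_one fun v _ => ?_
      rcases hε v with h | h <;> simp [h]
    have hσ := Finset.prod_mul_prod_compl S₀ ε
    rw [← hσ]
    change _ = ((2 : ℂ) ^ Fintype.card V)⁻¹ * ((∏ v ∈ S₀, ε v) * (ψ (a + c') +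
      ((∏ v ∈ S₀, ε v) * ∏ v ∈ S₀ᶜ, ε v) * ψ (a + (c' + fun _ => 1))))
    linear_combination (-((2 : ℂ) ^ Fintype.card V)⁻¹ * (∏ v ∈ S₀ᶜ, ε v) *
      ψ (a + (c' + fun _ => 1))) * hsq
end

section
/- Let G be a finite connected simple graph with nonempty vertex set V and edge set E, let ε : V → {1, −1}, and set σ = ∏_{v∈V} ε_v. If c', c'' ∈ 𝔽₂^V satisfy δc' = δc'', then either c'' = c' or c'' = c' + 1_V, and in both cases ε(c') · X_V(c') ∘ (id + σ L_V) = ε(c'') · X_V(c'') ∘ (id + σ L_V) as linear operators on H_V, where L_V = X_V(1_V). Hence the post-measurement state produced by the gauging measurement is independent of the choice of byproduct operator X_V(c') with δc' = z. -/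
open Finset

variable {V : Type*} [Fintype V] [DecidableEq V]

/-- **Independence of the byproduct operator.** For a connected graph `G` on
a nonempty vertex set and outcomes `ε : V → {±1}` with `σ = ∏_v ε_v`: if
`δ c' = δ c''` then `c'' = c'` or `c'' = c' + 1_V`, and in both cases
`ε(c') X_V(c') ∘ (id + σ L_V) = ε(c'') X_V(c'') ∘ (id + σ L_V)`
where `L_V = X_V(1_V)`. -/
theorem byproduct_independence {V : Type*} [Fintype V] [DecidableEq V] [Nonempty V]
    (G : SimpleGraph V) [Fintype G.edgeSet] (hG : G.Connected)
    (ε : V → ℂ) (hε : ∀ v, ε v = 1 ∨ ε v = -1)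
    (c' c'' : V → ZMod 2) (h : cobd G c' = cobd G c'') :
    (c'' = c' ∨ c'' = c' + fun _ => 1) ∧
    (∏ v ∈ Finset.univ.filter (fun v => c' v = 1), ε v) •
        (PXV c' * (1 + (∏ v, ε v) • PXV (fun _ => (1 : ZMod 2))))
      = (∏ v ∈ Finset.univ.filter (fun v => c'' v = 1), ε v) •
        (PXV c'' * (1 + (∏ v, ε v) • PXV (fun _ => (1 : ZMod 2)))) := by
  have key : c'' = c' ∨ c'' = c' + fun _ => 1 := by
    have hadj : ∀ u v, G.Adj u v → c' u + c' v = c'' u + c'' v := by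
      intro u v huv
      have h1 := congrFun h ⟨s(u, v), huv⟩
      have hf : ∀ c : V → ZMod 2, cobd G c ⟨s(u, v), huv⟩ = c u + c v := by
        intro c
        change (∑ w : V, if w ∈ s(u, v) then c w else 0) = _
        rw [← Finset.sum_filter]
        have : Finset.univ.filter (fun w => w ∈ s(u, v)) = {u, v} := by
          ext w; simp
        rw [this, Finset.sum_pair huv.ne]
      rwa [hf, hf] at h1
    have hz : ∀ a b c d : ZMod 2, a + b = c + d → c - a = d - b := by decide
    have hconst : ∀ u v, c'' u - c' u = c'' v - c' v := by
      intro u v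
      obtain ⟨p⟩ := hG.preconnected u v
      induction p with
      | nil => rfl
      | cons hh _ ih => exact (hz _ _ _ _ (hadj _ _ hh)).trans ih
    obtain ⟨v0⟩ := ‹Nonempty V›
    have h01 : ∀ a : ZMod 2, a = 0 ∨ a = 1 := by decide
    rcases h01 (c'' v0 - c' v0) with h0 | h0
    · left; funext v
      exact sub_eq_zero.mp ((hconst v v0).trans h0)
    · right; funext v
      have := (hconst v v0).trans h0
      rw [sub_eq_iff_eq_add] at this
      rw [this, add_comm]; rfl
  refine ⟨key, ?_⟩
  rcases key with rfl | rfl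
  · rfl
  have hz : ∀ a : ZMod 2, a + 1 = 1 ↔ ¬ a = 1 := by decide
  have hsq : ∀ s : Finset V, (∏ v ∈ s, ε v) * (∏ v ∈ s, ε v) = 1 := by
    intro s
    rw [← Finset.prod_mul_distrib]
    refine Finset.prod_eq_one fun v _ => ?_
    rcases hε v with h | h <;> simp [h]
  have hsplit := Finset.prod_filter_mul_prod_filter_not Finset.univ (fun v => c' v = 1) ε
  have hA := hsq (Finset.univ.filter (fun v => c' v = 1))
  have hB := hsq (Finset.univ.filter (fun v => ¬ c' v = 1))
  have hf : Finset.univ.filter (fun v => (c' + (fun _ => 1 : V → ZMod 2) : V → ZMod 2) v = 1)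
      = Finset.univ.filter (fun v => ¬ c' v = 1) := by
    ext v; simp [hz]
  rw [hf, ← hsplit]
  generalize (∏ v ∈ Finset.univ.filter (fun v => c' v = 1), ε v) = A at *
  generalize (∏ v ∈ Finset.univ.filter (fun v => ¬ c' v = 1), ε v) = B at *
  have h11 : ∀ a : ZMod 2, a + 1 + 1 = a := by decide
  refine LinearMap.ext fun f => ?_
  funext s
  change A * (f (s + c') + (A * B) * f (s + c' + fun _ => 1))
    = B * (f (s + (c' + fun _ => 1)) + (A * B) * f (s + (c' + fun _ => 1) + fun _ => 1))
  have e1 : s + (c' + fun _ => (1 : ZMod 2)) = s + c' + fun _ => 1 := (add_assoc _ _ _).symm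
  have e2 : s + c' + (fun _ => (1 : ZMod 2)) + (fun _ => (1 : ZMod 2)) = s + c' := by
    funext v; exact h11 _
  rw [e1, e2]
  linear_combination (B * f (s + c' + fun _ => 1)) * hA - (A * f (s + c')) * hB
end

section
/- With the deformed code construction: the deformed check matrices satisfy H'_X (H'_Z)ᵀ = 0 over 𝔽₂; that is, every Gauss row a_v = (1_v, δ1_v) is orthogonal to every deformed Z-check row (z, γ_z) and to every cycle row (0, p), and every padded original X-check row is orthogonal to every row of H'_Z. Hence the deformed code is a valid CSS code. -/
open Finset

variable {V : Type*} [Fintype V] [DecidableEq V]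

/-- The Gauss's law row `a_v = (1_v, δ 1_v) ∈ 𝔽₂^n × 𝔽₂^E` of the deformed `X`-check
matrix, for a vertex `v` of the graph `G` on the support of the logical `ℓ`. -/
def gaussRow {n : ℕ} {ℓ : Fin n → ZMod 2} (G : SimpleGraph {i : Fin n // ℓ i = 1})
    [Fintype G.edgeSet] (v : {i : Fin n // ℓ i = 1}) : (Fin n ⊕ G.edgeSet) → ZMod 2 :=
  Sum.elim (fun i => if i = v.1 then 1 else 0) (cobd G (fun w => if w = v then 1 else 0))

/-- The deformed `X`-check matrix `H'_X`: the rows of `H_X` padded with zeros on the edge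
coordinates, together with the Gauss's law rows `a_v` for the vertices of `G`. -/
def deformedHX {n : ℕ} {rX : Type*} (HX : Matrix rX (Fin n) (ZMod 2))
    {ℓ : Fin n → ZMod 2} (G : SimpleGraph {i : Fin n // ℓ i = 1}) [Fintype G.edgeSet] :
    Matrix (rX ⊕ {i : Fin n // ℓ i = 1}) (Fin n ⊕ G.edgeSet) (ZMod 2) :=
  Matrix.of (Sum.elim (fun j => Sum.elim (fun i => HX j i) 0) (fun v => gaussRow G v))

/-- The deformed `Z`-check matrix `H'_Z`: the rows `(z, γ_z)` for the rows `z` of `H_Z`,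
together with the cycle rows `(0, p)` for the rows `p` of the cycle-basis matrix `N`. -/
def deformedHZ {n : ℕ} {rZ rN : Type*} (HZ : Matrix rZ (Fin n) (ZMod 2))
    {ℓ : Fin n → ZMod 2} (G : SimpleGraph {i : Fin n // ℓ i = 1}) [Fintype G.edgeSet]
    (γ : rZ → G.edgeSet → ZMod 2) (N : rN → G.edgeSet → ZMod 2) :
    Matrix (rZ ⊕ rN) (Fin n ⊕ G.edgeSet) (ZMod 2) :=
  Matrix.of (Sum.elim (fun z => Sum.elim (fun i => HZ z i) (γ z)) (fun p => Sum.elim 0 (N p)))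

/-- The deformed check matrices satisfy `H'_X (H'_Z)ᵀ = 0` over `𝔽₂`:
every Gauss row `(1_v, δ1_v)` is orthogonal to every deformed `Z`-check row `(z, γ_z)`
and to every cycle row `(0, p)`, and every padded original `X`-check row is orthogonal to
every row of `H'_Z`. Hence the deformed code is a valid CSS code. -/
theorem deformed_code_is_CSS {n : ℕ} {rX rZ rN : Type*}
    [Fintype rX] [Fintype rZ] [Fintype rN]
    (HX : Matrix rX (Fin n) (ZMod 2)) (HZ : Matrix rZ (Fin n) (ZMod 2))
    (hCSS : HX * HZ.transpose = 0)
    (ℓ : Fin n → ZMod 2) (hℓZ : HZ.mulVec ℓ = 0)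
    (hℓX : ℓ ∉ LinearMap.range HX.vecMulLinear)
    (G : SimpleGraph {i : Fin n // ℓ i = 1}) [Fintype G.edgeSet] (hG : G.Connected)
    (γ : rZ → G.edgeSet → ZMod 2)
    (hγ : ∀ z : rZ, bd G (γ z) = fun v => HZ z v.1)
    (N : rN → G.edgeSet → ZMod 2)
    (hN0 : ∀ p : rN, bd G (N p) = 0)
    (hNli : LinearIndependent (ZMod 2) N)
    (hNspan : ∀ y : G.edgeSet → ZMod 2, bd G y = 0 →
      y ∈ Submodule.span (ZMod 2) (Set.range N)) :
    deformedHX HX G * (deformedHZ HZ G γ N).transpose = 0 := by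
  have hcob : ∀ (v : {i : Fin n // ℓ i = 1}) (y : G.edgeSet → ZMod 2),
      ∑ e, cobd G (fun w => if w = v then 1 else 0) e * y e = bd G y v := by
    intro v y
    simp only [cobd, bd, LinearMap.coe_mk, AddHom.coe_mk]
    refine Finset.sum_congr rfl fun e _ => ?_
    rw [Finset.sum_eq_single v]
    · simp
    · intro b _ hb
      simp [hb]
    · simp
  ext a b
  rw [Matrix.mul_apply, Fintype.sum_sum_type]
  rcases a with j | v <;> rcases b with z | p
  · have h := congrFun (congrFun hCSS j) z
    rw [Matrix.mul_apply] at h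
    simpa [deformedHX, deformedHZ] using h
  · simp [deformedHX, deformedHZ]
  · have h := hcob v (γ z)
    rw [hγ] at h
    simp only [deformedHX, deformedHZ, gaussRow, Matrix.transpose_apply, Matrix.of_apply,
      Sum.elim_inl, Sum.elim_inr, Matrix.zero_apply]
    rw [h]
    simp [CharTwo.add_self_eq_zero]
  · have h := hcob v (N p)
    rw [hN0] at h
    simp only [deformedHX, deformedHZ, gaussRow, Matrix.transpose_apply, Matrix.of_apply,
      Sum.elim_inl, Sum.elim_inr, Matrix.zero_apply]
    rw [h]
    simp
end

section
/- With the deformed code construction, assuming G is connected and ℓ is not in the row space of H_X: the rank of the deformed X-check matrix satisfies rank H'_X = rank H_X + |V|. In particular, the Gauss rows a_v are linearly independent from each other and from the padded rows of H_X. -/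
open Finset

variable {V : Type*} [Fintype V] [DecidableEq V]

/-- The coboundary of a cochain is the sum of its values at the two endpoints. -/
theorem cobd_eq_zero_adj (G : SimpleGraph V) [Fintype G.edgeSet] (c : V → ZMod 2)
    (h : cobd G c = 0) {a b : V} (hab : G.Adj a b) : c a = c b := by
  have h1 := congrFun h ⟨s(a, b), hab⟩
  have h2 : (∑ v : V, if v ∈ s(a, b) then c v else 0) = c a + c b := by
    rw [← Finset.sum_filter]
    have : (Finset.univ.filter fun v => v ∈ s(a, b)) = {a, b} := by
      ext v; simp
    rw [this, Finset.sum_pair hab.ne]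
  have h3 : c a + c b = 0 := by
    rw [← h2]; exact h1
  exact CharTwo.add_eq_zero.mp h3

theorem cobd_eq_zero_const (G : SimpleGraph V) [Fintype G.edgeSet] (hG : G.Connected)
    (c : V → ZMod 2) (h : cobd G c = 0) (a b : V) : c a = c b := by
  obtain ⟨w⟩ := hG.preconnected a b
  induction w with
  | nil => rfl
  | cons hab _ ih => exact (cobd_eq_zero_adj G c h hab).trans ih

theorem rank_add_ker {m k : Type*} [Fintype m] [Fintype k] (A : Matrix m k (ZMod 2)) :
    A.rank + Module.finrank (ZMod 2) (LinearMap.ker A.vecMulLinear) = Fintype.card m := by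
  classical
  have h := LinearMap.finrank_range_add_finrank_ker A.vecMulLinear
  rw [Module.finrank_fintype_fun_eq_card] at h
  rw [← h, ← Matrix.rank_transpose, Matrix.rank, Matrix.mulVecLin_transpose]

theorem deformed_vecMul_inl {n : ℕ} {rX : Type*} [Fintype rX]
    (HX : Matrix rX (Fin n) (ZMod 2)) (ℓ : Fin n → ZMod 2)
    (G : SimpleGraph {i : Fin n // ℓ i = 1}) [Fintype G.edgeSet]
    (x : rX ⊕ {i : Fin n // ℓ i = 1} → ZMod 2) (i : Fin n) :
    Matrix.vecMul x (deformedHX HX G) (Sum.inl i) =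
      Matrix.vecMul (x ∘ Sum.inl) HX i
        + ∑ v : {i : Fin n // ℓ i = 1}, x (Sum.inr v) * (if i = v.1 then 1 else 0) := by
  simp [Matrix.vecMul, dotProduct, deformedHX, gaussRow]

theorem deformed_vecMul_inr {n : ℕ} {rX : Type*} [Fintype rX]
    (HX : Matrix rX (Fin n) (ZMod 2)) (ℓ : Fin n → ZMod 2)
    (G : SimpleGraph {i : Fin n // ℓ i = 1}) [Fintype G.edgeSet]
    (x : rX ⊕ {i : Fin n // ℓ i = 1} → ZMod 2) (e : G.edgeSet) :
    Matrix.vecMul x (deformedHX HX G) (Sum.inr e) = cobd G (x ∘ Sum.inr) e := by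
  simp only [Matrix.vecMul, dotProduct, deformedHX, gaussRow, Fintype.sum_sum_type,
    Matrix.of_apply, Sum.elim_inl, Sum.elim_inr, Pi.zero_apply, mul_zero,
    Finset.sum_const_zero, zero_add, cobd, LinearMap.coe_mk, AddHom.coe_mk]
  refine Finset.sum_congr rfl fun v _ => ?_
  rw [Finset.sum_eq_single v]
  · simp
  · intro b _ hb; simp [hb]
  · simp

theorem deformed_ker {n : ℕ} {rX : Type*} [Fintype rX]
    (HX : Matrix rX (Fin n) (ZMod 2)) (ℓ : Fin n → ZMod 2)
    (hℓX : ℓ ∉ LinearMap.range HX.vecMulLinear)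
    (G : SimpleGraph {i : Fin n // ℓ i = 1}) [Fintype G.edgeSet] (hG : G.Connected)
    (x : rX ⊕ {i : Fin n // ℓ i = 1} → ZMod 2)
    (hx : Matrix.vecMul x (deformedHX HX G) = 0) :
    (∀ v, x (Sum.inr v) = 0) := by
  have hc : cobd G (x ∘ Sum.inr) = 0 := by
    funext e
    rw [← deformed_vecMul_inr, hx]; rfl
  have hconst := cobd_eq_zero_const G hG _ hc
  intro v
  by_contra hv
  have hz : ∀ a : ZMod 2, a ≠ 0 → a = 1 := by decide
  have h1 : ∀ w, x (Sum.inr w) = 1 := fun w => (hconst w v).trans (hz _ hv)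
  apply hℓX
  refine ⟨x ∘ Sum.inl, ?_⟩
  funext i
  have hi := deformed_vecMul_inl HX ℓ G x i
  have hs : (∑ v : {i : Fin n // ℓ i = 1}, x (Sum.inr v) * (if i = v.1 then 1 else 0)) = ℓ i := by
    by_cases hl : ℓ i = 1
    · rw [Finset.sum_eq_single (⟨i, hl⟩ : {i : Fin n // ℓ i = 1})]
      · simp [h1, hl]
      · intro b _ hb
        have : i ≠ b.1 := fun h => hb (Subtype.ext h.symm)
        simp [this]
      · simp
    · have h0 : ℓ i = 0 := by
        by_contra h; exact hl (hz _ h)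
      rw [h0]
      refine Finset.sum_eq_zero fun b _ => ?_
      have : i ≠ b.1 := fun h => hl (h ▸ b.2)
      simp [this]
  rw [hs, hx] at hi
  exact CharTwo.add_eq_zero.mp hi.symm

/-- For a connected graph `G` and a logical `ℓ` not in the row space of
`H_X`, the rank of the deformed `X`-check matrix satisfies
`rank H'_X = rank H_X + |V|`: the Gauss rows are linearly independent from each other and
from the padded rows of `H_X`. -/
theorem deformed_HX_rank {n : ℕ} {rX rZ rN : Type*}
    [Fintype rX] [Fintype rZ] [Fintype rN]
    (HX : Matrix rX (Fin n) (ZMod 2)) (HZ : Matrix rZ (Fin n) (ZMod 2))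
    (hCSS : HX * HZ.transpose = 0)
    (ℓ : Fin n → ZMod 2) (hℓZ : HZ.mulVec ℓ = 0)
    (hℓX : ℓ ∉ LinearMap.range HX.vecMulLinear)
    (G : SimpleGraph {i : Fin n // ℓ i = 1}) [Fintype G.edgeSet] (hG : G.Connected) :
    (deformedHX HX G).rank = HX.rank + Fintype.card {i : Fin n // ℓ i = 1} := by
  classical
  have e : LinearMap.ker (deformedHX HX G).vecMulLinear ≃ₗ[ZMod 2]
      LinearMap.ker HX.vecMulLinear :=
    { toFun := fun x => ⟨x.1 ∘ Sum.inl, by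
        have hx : Matrix.vecMul x.1 (deformedHX HX G) = 0 := x.2
        have h0 := deformed_ker HX ℓ hℓX G hG x.1 hx
        rw [LinearMap.mem_ker]
        funext i
        have hi := deformed_vecMul_inl HX ℓ G x.1 i
        rw [hx] at hi
        simp only [h0, zero_mul, Finset.sum_const_zero, add_zero] at hi
        exact hi.symm⟩
      map_add' := fun _ _ => rfl
      map_smul' := fun _ _ => rfl
      invFun := fun y => ⟨Sum.elim y.1 0, by
        have hy : Matrix.vecMul y.1 HX = 0 := y.2
        rw [LinearMap.mem_ker]
        funext i
        rcases i with i | i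
        · refine (deformed_vecMul_inl HX ℓ G _ i).trans ?_
          simp [hy]
        · refine (deformed_vecMul_inr HX ℓ G _ i).trans ?_
          simp⟩
      left_inv := fun x => by
        apply Subtype.ext
        funext i
        rcases i with i | i
        · rfl
        · exact (deformed_ker HX ℓ hℓX G hG x.1 x.2 i).symm
      right_inv := fun y => rfl }
  have h1 := rank_add_ker (deformedHX HX G)
  have h2 := rank_add_ker HX
  rw [e.finrank_eq, Fintype.card_sum] at h1
  omega
end

section
/- With the deformed code construction, assuming G is connected with nonempty vertex set: the rank of the deformed Z-check matrix satisfies rank H'_Z = rank H_Z + |E| − |V| + 1. -/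
open Finset

variable {V : Type*} [Fintype V] [DecidableEq V]

theorem aux_sum_bd {V : Type*} [Fintype V] [DecidableEq V] (G : SimpleGraph V) [Fintype G.edgeSet]
    (x : G.edgeSet → ZMod 2) : ∑ v, bd G x v = 0 := by
  simp only [bd, LinearMap.coe_mk, AddHom.coe_mk]
  rw [Finset.sum_comm]
  apply Finset.sum_eq_zero
  rintro ⟨e, he⟩ _
  induction e using Sym2.ind with
  | _ a b =>
    have hab : a ≠ b := G.ne_of_adj he
    have : ∀ v, (if v ∈ s(a, b) then x ⟨s(a, b), he⟩ else 0)
        = (if v = a then x ⟨s(a, b), he⟩ else 0) + (if v = b then x ⟨s(a, b), he⟩ else 0) := by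
      intro v
      by_cases h1 : v = a
      · subst h1; simp [hab]
      · simp [h1]
    simp only [this, Finset.sum_add_distrib, Finset.sum_ite_eq', Finset.mem_univ, if_true]
    exact CharTwo.add_self_eq_zero _

theorem aux_bd_single {V : Type*} [Fintype V] [DecidableEq V] (G : SimpleGraph V)
    [Fintype G.edgeSet] {a b : V} (h : G.Adj a b) :
    (Pi.single a 1 - Pi.single b 1 : V → ZMod 2) ∈ LinearMap.range (bd G) := by
  classical
  refine ⟨Pi.single ⟨s(a, b), h⟩ 1, ?_⟩
  funext v
  have hab : a ≠ b := G.ne_of_adj h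
  simp only [bd, LinearMap.coe_mk, AddHom.coe_mk]
  rw [Finset.sum_eq_single ⟨s(a, b), h⟩]
  · rw [Pi.sub_apply, CharTwo.sub_eq_add]
    by_cases h1 : v = a
    · subst h1; simp [hab]
    · by_cases h2 : v = b
      · subst h2; simp [h1]
      · simp [h1, h2]
  · intro e _ he
    simp [Pi.single_eq_of_ne he]
  · simp

theorem aux_bd_rank {V : Type*} [Fintype V] [DecidableEq V] (G : SimpleGraph V)
    [Fintype G.edgeSet] (hG : G.Connected) :
    Module.finrank (ZMod 2) (LinearMap.range (bd G)) + 1 = Fintype.card V := by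
  obtain ⟨v0⟩ := hG.nonempty
  let S : (V → ZMod 2) →ₗ[ZMod 2] ZMod 2 := ∑ v, LinearMap.proj v
  have hS : ∀ y, S y = ∑ v, y v := fun y => by simp [S]
  have hsurj : Function.Surjective S := fun c => ⟨Pi.single v0 c, by simp [hS]⟩
  have hdiff : ∀ a b, (Pi.single a 1 - Pi.single b 1 : V → ZMod 2) ∈ LinearMap.range (bd G) := by
    intro a b
    obtain ⟨w⟩ := hG.preconnected a b
    induction w with
    | nil => simp
    | cons h p ih =>
      have := Submodule.add_mem _ (aux_bd_single G h) ih
      simpa using this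
  have hker : LinearMap.range (bd G) = LinearMap.ker S := by
    apply le_antisymm
    · rintro _ ⟨x, rfl⟩
      rw [LinearMap.mem_ker, hS]
      exact aux_sum_bd G x
    · intro y hy
      rw [LinearMap.mem_ker, hS] at hy
      have : y = ∑ v, y v • (Pi.single v 1 - Pi.single v0 1 : V → ZMod 2) := by
        simp only [smul_sub, Finset.sum_sub_distrib, ← Finset.sum_smul, hy, zero_smul, sub_zero]
        funext w
        simp [Finset.sum_apply, Pi.single_apply]
      rw [this]
      exact Submodule.sum_mem _ fun v _ => Submodule.smul_mem _ _ (hdiff v v0)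
  have := LinearMap.finrank_range_add_finrank_ker S
  rw [LinearMap.range_eq_top.2 hsurj, finrank_top, Module.finrank_self, Module.finrank_fintype_fun_eq_card] at this
  rw [hker]; omega

theorem aux_rank {m n : Type*} [Fintype m] [Fintype n] (A : Matrix m n (ZMod 2)) :
    A.rank + Module.finrank (ZMod 2) (LinearMap.ker A.vecMulLinear) = Fintype.card m := by
  classical
  have := LinearMap.finrank_range_add_finrank_ker A.vecMulLinear
  rw [Module.finrank_fintype_fun_eq_card] at this
  rw [← this, ← Matrix.rank_transpose, Matrix.rank, Matrix.mulVecLin_transpose]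

/-- For a connected graph `G` with nonempty vertex set, the rank of the
deformed `Z`-check matrix satisfies `rank H'_Z = rank H_Z + |E| − |V| + 1`; stated
additively: `rank H'_Z + |V| = rank H_Z + |E| + 1`. -/
theorem deformed_HZ_rank {n : ℕ} {rX rZ rN : Type*}
    [Fintype rX] [Fintype rZ] [Fintype rN]
    (HX : Matrix rX (Fin n) (ZMod 2)) (HZ : Matrix rZ (Fin n) (ZMod 2))
    (hCSS : HX * HZ.transpose = 0)
    (ℓ : Fin n → ZMod 2) (hℓZ : HZ.mulVec ℓ = 0)
    (hℓX : ℓ ∉ LinearMap.range HX.vecMulLinear)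
    (G : SimpleGraph {i : Fin n // ℓ i = 1}) [Fintype G.edgeSet] (hG : G.Connected)
    (γ : rZ → G.edgeSet → ZMod 2)
    (hγ : ∀ z : rZ, bd G (γ z) = fun v => HZ z v.1)
    (N : rN → G.edgeSet → ZMod 2)
    (hN0 : ∀ p : rN, bd G (N p) = 0)
    (hNli : LinearIndependent (ZMod 2) N)
    (hNspan : ∀ y : G.edgeSet → ZMod 2, bd G y = 0 →
      y ∈ Submodule.span (ZMod 2) (Set.range N)) :
    (deformedHZ HZ G γ N).rank + Fintype.card {i : Fin n // ℓ i = 1}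
      = HZ.rank + Fintype.card G.edgeSet + 1 := by
  classical
  have h1 := aux_rank HZ
  have h2 := aux_rank (deformedHZ HZ G γ N)
  have h3 := aux_bd_rank G hG
  have h4 := LinearMap.finrank_range_add_finrank_ker (bd G)
  rw [Module.finrank_fintype_fun_eq_card] at h4
  have hspan : Submodule.span (ZMod 2) (Set.range N) = LinearMap.ker (bd G) := by
    apply le_antisymm
    · rw [Submodule.span_le]
      rintro _ ⟨p, rfl⟩
      exact hN0 p
    · exact fun y hy => hNspan y hy
  have h5 : Module.finrank (ZMod 2) (LinearMap.ker (bd G)) = Fintype.card rN := by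
    rw [← hspan, finrank_span_eq_card hNli]
  have hmem : ∀ c : rZ ⊕ rN → ZMod 2, c ∈ LinearMap.ker (deformedHZ HZ G γ N).vecMulLinear ↔
      (∑ z, c (Sum.inl z) • HZ z = 0 ∧
        ∑ z, c (Sum.inl z) • γ z + ∑ p, c (Sum.inr p) • N p = 0) := by
    intro c
    rw [LinearMap.mem_ker, Matrix.vecMulLinear_apply]
    constructor
    · intro h
      constructor
      · funext i
        have := congrFun h (Sum.inl i)
        simpa [Matrix.vecMul, dotProduct, deformedHZ, Fintype.sum_sum_type] using this
      · funext i
        have := congrFun h (Sum.inr i)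
        simpa [Matrix.vecMul, dotProduct, deformedHZ, Fintype.sum_sum_type] using this
    · rintro ⟨ha, hb⟩
      funext i
      rcases i with i | i
      · have := congrFun ha i
        simpa [Matrix.vecMul, dotProduct, deformedHZ, Fintype.sum_sum_type] using this
      · have := congrFun hb i
        simpa [Matrix.vecMul, dotProduct, deformedHZ, Fintype.sum_sum_type] using this
  have hmem' : ∀ a : rZ → ZMod 2, a ∈ LinearMap.ker HZ.vecMulLinear ↔ ∑ z, a z • HZ z = 0 := by
    intro a
    rw [LinearMap.mem_ker, Matrix.vecMulLinear_apply, Matrix.vecMul_eq_sum]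
  let f : LinearMap.ker (deformedHZ HZ G γ N).vecMulLinear →ₗ[ZMod 2]
      LinearMap.ker HZ.vecMulLinear :=
    (LinearMap.funLeft (ZMod 2) (ZMod 2) (Sum.inl : rZ → rZ ⊕ rN)).restrict
      (fun c hc => (hmem' _).2 ((hmem c).1 hc).1)
  have hf : Function.Bijective f := by
    constructor
    · rw [← LinearMap.ker_eq_bot, LinearMap.ker_eq_bot']
      rintro ⟨c, hc⟩ h0
      have h0' : ∀ z, c (Sum.inl z) = 0 := fun z => congrFun (congrArg Subtype.val h0) z
      have hb := ((hmem c).1 hc).2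
      simp only [h0', zero_smul, Finset.sum_const_zero, zero_add] at hb
      have hp := Fintype.linearIndependent_iff.1 hNli (fun p => c (Sum.inr p)) hb
      apply Subtype.ext
      funext i
      rcases i with i | i
      · exact h0' i
      · exact hp i
    · rintro ⟨a, ha⟩
      have ha' := (hmem' a).1 ha
      have hbd : bd G (∑ z, a z • γ z) = 0 := by
        rw [map_sum]
        simp only [map_smul, hγ]
        funext v
        have := congrFun ha' v.1
        simpa using this
      obtain ⟨b, hb⟩ := (Submodule.mem_span_range_iff_exists_fun (ZMod 2)).1 (hNspan _ hbd)
      refine ⟨⟨Sum.elim a b, (hmem _).2 ⟨by simpa using ha', ?_⟩⟩, ?_⟩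
      · simp only [Sum.elim_inl, Sum.elim_inr, hb]
        funext i
        exact CharTwo.add_self_eq_zero _
      · apply Subtype.ext
        funext z
        rfl
  have h6 := (LinearEquiv.ofBijective f hf).finrank_eq
  rw [Fintype.card_sum] at h2
  omega
end

section
/- With the deformed code construction, assuming G is connected and ℓ is not in the row space of H_X: the number of logical qubits of the deformed code is exactly one fewer than that of the original code; that is, (n + |E|) − rank H'_X − rank H'_Z = (n − rank H_X − rank H_Z) − 1. In other words, the gauging code deformation reduces the dimension of the codespace by exactly one qubit, corresponding to the measured logical operator. -/
open Finset

variable {V : Type*} [Fintype V] [DecidableEq V]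

section helpers_aux

theorem rank_aux {r s m n : Type*} [Fintype r] [Fintype s] [Fintype m] [Fintype n]
    (A : Matrix (r ⊕ s) m (ZMod 2)) (B : Matrix r n (ZMod 2))
    (h1 : ∀ a b, Matrix.vecMul (Sum.elim a b) A = 0 → Matrix.vecMul a B = 0)
    (h2 : ∀ b, Matrix.vecMul (Sum.elim 0 b) A = 0 → b = 0)
    (h3 : ∀ a, Matrix.vecMul a B = 0 → ∃ b, Matrix.vecMul (Sum.elim a b) A = 0) :
    A.rank = B.rank + Fintype.card s := by
  have hA := LinearMap.finrank_range_add_finrank_ker A.vecMulLinear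
  have hB := LinearMap.finrank_range_add_finrank_ker B.vecMulLinear
  have rA : A.rank = Module.finrank (ZMod 2) (LinearMap.range A.vecMulLinear) := by
    rw [← Matrix.rank_transpose, Matrix.rank, Matrix.mulVecLin_transpose]
  have rB : B.rank = Module.finrank (ZMod 2) (LinearMap.range B.vecMulLinear) := by
    rw [← Matrix.rank_transpose, Matrix.rank, Matrix.mulVecLin_transpose]
  have hel : ∀ x : r ⊕ s → ZMod 2, Sum.elim (fun i => x (Sum.inl i)) (fun j => x (Sum.inr j)) = x := by
    intro x; ext i; cases i <;> rfl
  let p : (r ⊕ s → ZMod 2) →ₗ[ZMod 2] (r → ZMod 2) := LinearMap.funLeft _ _ Sum.inl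
  have hp : ∀ x ∈ LinearMap.ker A.vecMulLinear, p x ∈ LinearMap.ker B.vecMulLinear := by
    intro x hx
    rw [LinearMap.mem_ker, Matrix.vecMulLinear_apply] at *
    rw [← hel x] at hx
    exact h1 _ _ hx
  have e : Module.finrank (ZMod 2) (LinearMap.ker A.vecMulLinear)
      = Module.finrank (ZMod 2) (LinearMap.ker B.vecMulLinear) := by
    refine (LinearEquiv.ofBijective (p.restrict hp) ⟨?_, ?_⟩).finrank_eq
    · rw [injective_iff_map_eq_zero]
      rintro ⟨x, hx⟩ h
      have h' : (fun i => x (Sum.inl i)) = 0 := congrArg Subtype.val h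
      rw [LinearMap.mem_ker, Matrix.vecMulLinear_apply, ← hel x, h'] at hx
      have := h2 _ hx
      ext i
      cases i with
      | inl i => exact congrFun h' i
      | inr i => exact congrFun this i
    · rintro ⟨a, ha⟩
      obtain ⟨b, hb⟩ := h3 a ha
      exact ⟨⟨Sum.elim a b, hb⟩, rfl⟩
  simp only [Module.finrank_pi, Fintype.card_sum] at hA hB
  omega

theorem cobd_ker_aux {W : Type*} [Fintype W] [DecidableEq W] (G : SimpleGraph W)
    [Fintype G.edgeSet] (hG : G.Connected) (c : W → ZMod 2) (hc : cobd G c = 0) (u v : W) :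
    c u = c v := by
  have adj : ∀ u v, G.Adj u v → c u = c v := by
    intro u v h
    have := congrFun hc ⟨s(u, v), h⟩
    have hs : (∑ w : W, if w ∈ s(u, v) then c w else 0) = c u + c v := by
      rw [← Finset.sum_filter, ← Finset.sum_pair h.ne]
      congr 1
      ext w; simp
    change (∑ w : W, if w ∈ s(u, v) then c w else 0) = 0 at this
    rw [hs] at this
    exact CharTwo.add_eq_zero.1 this
  obtain ⟨w⟩ := hG.preconnected u v
  induction w with
  | nil => rfl
  | cons h _ ih => exact (adj _ _ h).trans ih

theorem cobd_const_aux {W : Type*} [Fintype W] [DecidableEq W] (G : SimpleGraph W)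
    [Fintype G.edgeSet] (a : ZMod 2) : cobd G (fun _ => a) = 0 := by
  ext ⟨e, he⟩
  induction e with
  | _ u v =>
    have h : G.Adj u v := he
    have hs : (∑ w : W, if w ∈ s(u, v) then a else 0) = a + a := by
      rw [← Finset.sum_filter, ← Finset.sum_pair (f := fun _ => a) h.ne]
      congr 1
      ext w; simp
    exact hs.trans (CharTwo.add_self_eq_zero a)

theorem bd_ker_aux {W : Type*} [Fintype W] [DecidableEq W] (G : SimpleGraph W)
    [Fintype G.edgeSet] (hG : G.Connected) :
    Module.finrank (ZMod 2) (LinearMap.ker (bd G)) + Fintype.card W = Fintype.card G.edgeSet + 1 := by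
  let B : Matrix W G.edgeSet (ZMod 2) := Matrix.of fun v e => if v ∈ (e : Sym2 W) then 1 else 0
  have b1 : bd G = B.mulVecLin := by
    refine LinearMap.ext fun x => funext fun v => ?_
    simp [bd, B, Matrix.mulVec, dotProduct]
  have b2 : cobd G = B.transpose.mulVecLin := by
    refine LinearMap.ext fun x => funext fun v => ?_
    simp [cobd, B, Matrix.vecMul, dotProduct]
  have h1 := LinearMap.finrank_range_add_finrank_ker (bd G)
  have h2 := LinearMap.finrank_range_add_finrank_ker (cobd G)
  have h3 : Module.finrank (ZMod 2) (LinearMap.range (bd G))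
    = Module.finrank (ZMod 2) (LinearMap.range (cobd G)) := by
    rw [b1, b2]; exact (Matrix.rank_transpose B).symm
  have h4 : Module.finrank (ZMod 2) (LinearMap.ker (cobd G)) = 1 := by
    obtain ⟨w⟩ := hG.nonempty
    rw [finrank_eq_one_iff']
    refine ⟨⟨fun _ => 1, cobd_const_aux G 1⟩, ?_, ?_⟩
    · intro h
      exact one_ne_zero (congrFun (congrArg Subtype.val h) w)
    · rintro ⟨c, hc⟩
      refine ⟨c w, Subtype.ext (funext fun v => ?_)⟩
      simpa using cobd_ker_aux G hG c hc w v
  simp only [Module.finrank_pi] at h1 h2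
  omega

end helpers_aux

/-- The gauging code deformation reduces the number of logical qubits by
exactly one: `(n + |E|) − rank H'_X − rank H'_Z = (n − rank H_X − rank H_Z) − 1`
(as integers). -/
theorem deformed_code_loses_one_logical {n : ℕ} {rX rZ rN : Type*}
    [Fintype rX] [Fintype rZ] [Fintype rN]
    (HX : Matrix rX (Fin n) (ZMod 2)) (HZ : Matrix rZ (Fin n) (ZMod 2))
    (hCSS : HX * HZ.transpose = 0)
    (ℓ : Fin n → ZMod 2) (hℓZ : HZ.mulVec ℓ = 0)
    (hℓX : ℓ ∉ LinearMap.range HX.vecMulLinear)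
    (G : SimpleGraph {i : Fin n // ℓ i = 1}) [Fintype G.edgeSet] (hG : G.Connected)
    (γ : rZ → G.edgeSet → ZMod 2)
    (hγ : ∀ z : rZ, bd G (γ z) = fun v => HZ z v.1)
    (N : rN → G.edgeSet → ZMod 2)
    (hN0 : ∀ p : rN, bd G (N p) = 0)
    (hNli : LinearIndependent (ZMod 2) N)
    (hNspan : ∀ y : G.edgeSet → ZMod 2, bd G y = 0 →
      y ∈ Submodule.span (ZMod 2) (Set.range N)) :
    ((n : ℤ) + Fintype.card G.edgeSet)
        - (deformedHX HX G).rank - (deformedHZ HZ G γ N).rank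
      = ((n : ℤ) - HX.rank - HZ.rank) - 1 := by
  have hZ : (deformedHZ HZ G γ N).rank = HZ.rank + Fintype.card rN := by
    have key : ∀ a b, Matrix.vecMul (Sum.elim a b) (deformedHZ HZ G γ N)
        = Sum.elim (Matrix.vecMul a HZ) (∑ z, a z • γ z + ∑ p, b p • N p) := by
      intro a b
      ext i
      cases i <;> simp [Matrix.vecMul, dotProduct, deformedHZ]
    have key0 : ∀ a b, Matrix.vecMul (Sum.elim a b) (deformedHZ HZ G γ N) = 0 ↔
        Matrix.vecMul a HZ = 0 ∧ (∑ z, a z • γ z + ∑ p, b p • N p) = 0 := by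
      intro a b
      rw [key, ← Sum.elim_zero_zero, Sum.elim_eq_iff]
    apply rank_aux
    · intro a b h
      exact ((key0 a b).1 h).1
    · intro b h
      have := ((key0 0 b).1 h).2
      simp only [Pi.zero_apply, zero_smul, Finset.sum_const_zero, zero_add] at this
      exact funext (Fintype.linearIndependent_iff.1 hNli b this)
    · intro a h
      have hb : bd G (∑ z, a z • γ z) = 0 := by
        ext v
        have := congrFun h v.1
        simpa [Matrix.vecMul, dotProduct, hγ] using this
      obtain ⟨b, hb⟩ := (Submodule.mem_span_range_iff_exists_fun (ZMod 2)).1 (hNspan _ hb)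
      refine ⟨b, (key0 a b).2 ⟨h, ?_⟩⟩
      rw [hb]
      ext e
      exact CharTwo.add_self_eq_zero _
  have hX : (deformedHX HX G).rank = HX.rank + Fintype.card {i : Fin n // ℓ i = 1} := by
    have key : ∀ a c, Matrix.vecMul (Sum.elim a c) (deformedHX HX G)
        = Sum.elim (Matrix.vecMul a HX + fun i => if h : ℓ i = 1 then c ⟨i, h⟩ else 0) (cobd G c) := by
      intro a c
      ext i
      cases i with
      | inl i =>
        simp only [Matrix.vecMul, dotProduct, deformedHX, gaussRow, Fintype.sum_sum_type,
          Sum.elim_inl, Sum.elim_inr, Matrix.of_apply, Pi.add_apply]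
        congr 1
        split_ifs with h
        · rw [Finset.sum_eq_single ⟨i, h⟩]
          · simp
          · intro b _ hb
            rw [if_neg, mul_zero]
            rintro rfl
            exact hb rfl
          · simp
        · refine Finset.sum_eq_zero fun b _ => ?_
          rw [if_neg, mul_zero]
          rintro rfl
          exact h b.2
      | inr e =>
        simp only [Matrix.vecMul, dotProduct, deformedHX, gaussRow, Fintype.sum_sum_type,
          Sum.elim_inl, Sum.elim_inr, Matrix.of_apply, Pi.zero_apply, mul_zero,
          Finset.sum_const_zero, zero_add]
        have : c = ∑ v, c v • (fun w => if w = v then (1 : ZMod 2) else 0) := by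
          ext w; simp
        conv_rhs => rw [this]
        simp
    have key0 : ∀ a c, Matrix.vecMul (Sum.elim a c) (deformedHX HX G) = 0 → c = 0 := by
      intro a c h
      rw [key, ← Sum.elim_zero_zero, Sum.elim_eq_iff] at h
      obtain ⟨h1, h2⟩ := h
      obtain ⟨w⟩ := hG.nonempty
      have hc : ∀ v, c v = c w := fun v => cobd_ker_aux G hG c h2 v w
      by_cases hw : c w = 0
      · ext v; rw [hc, hw]; rfl
      · exfalso
        have hw1 : c w = 1 := by
          generalize c w = x at hw
          revert x; decide
        apply hℓX
        refine ⟨a, ?_⟩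
        ext i
        have := congrFun h1 i
        simp only [hc, hw1, Pi.add_apply, Pi.zero_apply] at this
        rw [Matrix.vecMulLinear_apply, CharTwo.add_eq_zero.1 this]
        split_ifs with h
        · exact h.symm
        · generalize ℓ i = x at h
          revert x; decide
    have key1 : ∀ a, Matrix.vecMul (Sum.elim a 0) (deformedHX HX G) = 0 ↔ Matrix.vecMul a HX = 0 := by
      intro a
      rw [key, ← Sum.elim_zero_zero, Sum.elim_eq_iff]
      have : (fun i => if h : ℓ i = 1 then (0 : {i : Fin n // ℓ i = 1} → ZMod 2) ⟨i, h⟩ else 0)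
        = (0 : Fin n → ZMod 2) := by ext i; simp
      rw [this]; simp
    apply rank_aux
    · intro a c h
      obtain rfl := key0 a c h
      exact (key1 a).1 h
    · intro c h
      exact key0 _ c h
    · intro a h
      exact ⟨0, (key1 a).2 h⟩
  have hE := bd_ker_aux G hG
  have hN : Module.finrank (ZMod 2) (LinearMap.ker (bd G)) = Fintype.card rN := by
    have : LinearMap.ker (bd G) = Submodule.span (ZMod 2) (Set.range N) := by
      apply le_antisymm
      · intro y hy; exact hNspan y hy
      · rw [Submodule.span_le]
        rintro _ ⟨p, rfl⟩
        exact hN0 p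
    rw [this]
    convert finrank_span_eq_card hNli
  rw [hX, hZ]
  push_cast
  omega
end

section
/- Restriction lemma for Z-type logicals of the deformed code: with the deformed code construction, for every w ∈ 𝔽₂^{n+|E|} with H'_X w = 0, the restriction w|_n of w to the first n coordinates satisfies H_X (w|_n) = 0; and if w is not in the row space of H'_Z, then w|_n is not in the row space of H_Z. In particular, every Z-type logical operator of the deformed code restricts to a nontrivial Z-type logical operator of the original code. -/
open Finset

variable {V : Type*} [Fintype V] [DecidableEq V]

/-- **Restriction lemma for Z-type logicals.** Every `w` with
`H'_X w = 0` restricts on the first `n` coordinates to a vector in the kernel of `H_X`;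
and if `w` is not a deformed `Z`-stabilizer then its restriction is not a `Z`-stabilizer
of the original code. -/
theorem deformed_Z_logical_restriction {n : ℕ} {rX rZ rN : Type*}
    [Fintype rX] [Fintype rZ] [Fintype rN]
    (HX : Matrix rX (Fin n) (ZMod 2)) (HZ : Matrix rZ (Fin n) (ZMod 2))
    (hCSS : HX * HZ.transpose = 0)
    (ℓ : Fin n → ZMod 2) (hℓZ : HZ.mulVec ℓ = 0)
    (hℓX : ℓ ∉ LinearMap.range HX.vecMulLinear)
    (G : SimpleGraph {i : Fin n // ℓ i = 1}) [Fintype G.edgeSet] (hG : G.Connected)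
    (γ : rZ → G.edgeSet → ZMod 2)
    (hγ : ∀ z : rZ, bd G (γ z) = fun v => HZ z v.1)
    (N : rN → G.edgeSet → ZMod 2)
    (hN0 : ∀ p : rN, bd G (N p) = 0)
    (hNli : LinearIndependent (ZMod 2) N)
    (hNspan : ∀ y : G.edgeSet → ZMod 2, bd G y = 0 →
      y ∈ Submodule.span (ZMod 2) (Set.range N)) :
    ∀ w : (Fin n ⊕ G.edgeSet) → ZMod 2, (deformedHX HX G).mulVec w = 0 →
      HX.mulVec (fun i => w (Sum.inl i)) = 0 ∧
      (w ∉ LinearMap.range (deformedHZ HZ G γ N).vecMulLinear →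
        (fun i => w (Sum.inl i)) ∉ LinearMap.range HZ.vecMulLinear) := by
  intro w hw
  have hX : HX.mulVec (fun i => w (Sum.inl i)) = 0 := by
    funext j
    have h := congrFun hw (Sum.inl j)
    simpa [deformedHX, Matrix.mulVec, dotProduct] using h
  refine ⟨hX, fun hnot hmem => hnot ?_⟩
  obtain ⟨c, hc⟩ := hmem
  have hbd : bd G (fun e => w (Sum.inr e)) = fun v => w (Sum.inl v.1) := by
    funext v
    have h := congrFun hw (Sum.inr v)
    have hco : ∀ e : G.edgeSet, cobd G (fun u => if u = v then (1 : ZMod 2) else 0) e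
        = if v ∈ (e : Sym2 {i : Fin n // ℓ i = 1}) then 1 else 0 := by
      intro e
      change (∑ u, if u ∈ (e : Sym2 {i : Fin n // ℓ i = 1}) then
        (if u = v then (1 : ZMod 2) else 0) else 0) = _
      rw [Finset.sum_eq_single v]
      · simp
      · intro b _ hb
        simp [hb]
      · simp
    have h2 : w (Sum.inl v.1) + bd G (fun e => w (Sum.inr e)) v = 0 := by
      simpa [deformedHX, Matrix.mulVec, dotProduct, gaussRow, hco, bd] using h
    exact (CharTwo.add_eq_zero.mp h2).symm
  have hker : bd G ((fun e => w (Sum.inr e)) - ∑ z, c z • γ z) = 0 := by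
    rw [map_sub, hbd, map_sum]
    funext v
    have h := congrFun hc v.1
    simp only [Matrix.vecMulLinear_apply, Matrix.vecMul, dotProduct] at h
    simp [hγ, ← h]
  obtain ⟨d, hd⟩ := (Submodule.mem_span_range_iff_exists_fun (ZMod 2)).mp (hNspan _ hker)
  refine ⟨Sum.elim c d, ?_⟩
  funext q
  rcases q with i | e
  · have h := congrFun hc i
    simpa [deformedHZ, Matrix.vecMul, dotProduct] using h
  · have h := congrFun hd e
    simp only [Finset.sum_apply, Pi.smul_apply, Pi.sub_apply, smul_eq_mul] at h
    simp [deformedHZ, Matrix.vecMul, dotProduct, h]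
end

section
/- Space distance of the deformed code: with the deformed code construction, let d be the distance of the original CSS code, and let h ≥ 0 be a real number such that for every nonempty subset S ⊆ V with 2|S| ≤ |V|, the number of edges of G with exactly one endpoint in S is at least h·|S| (a Cheeger-type expansion bound for G). Then every vector w ∈ 𝔽₂^{n+|E|} satisfying either (H'_Z w = 0 and w is not in the row space of H'_X) or (H'_X w = 0 and w is not in the row space of H'_Z) has Hamming weight at least min(1, h)·d. That is, the distance d' of the deformed code satisfies d' ≥ min(h(G), 1)·d. -/
open Finset

variable {V : Type*} [Fintype V] [DecidableEq V]

theorem aux_adj (G : SimpleGraph V) [Fintype G.edgeSet] (x : G.edgeSet → ZMod 2)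
    (c : V → ZMod 2) : ∑ e, x e * cobd G c e = ∑ v, bd G x v * c v := by
  simp only [cobd, bd, LinearMap.coe_mk, AddHom.coe_mk, Finset.mul_sum, Finset.sum_mul]
  rw [Finset.sum_comm]
  refine Finset.sum_congr rfl fun v _ => Finset.sum_congr rfl fun e _ => ?_
  split <;> simp

theorem aux_exact (G : SimpleGraph V) [Fintype G.edgeSet] (x : G.edgeSet → ZMod 2)
    (hx : ∀ y, bd G y = 0 → ∑ e, y e * x e = 0) : ∃ c, cobd G c = x := by
  classical
  let φ : Module.Dual (ZMod 2) (G.edgeSet → ZMod 2) :=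
    { toFun := fun y => ∑ e, y e * x e
      map_add' := fun a b => by simp [add_mul, Finset.sum_add_distrib]
      map_smul' := fun r a => by simp [Finset.mul_sum, mul_assoc] }
  have h1 : φ ∈ LinearMap.range (bd G).dualMap := by
    rw [LinearMap.range_dualMap_eq_dualAnnihilator_ker, Submodule.mem_dualAnnihilator]
    intro y hy
    exact hx y hy
  obtain ⟨ψ, hψ⟩ := h1
  refine ⟨fun v => ψ (Pi.single v 1), ?_⟩
  funext e
  have h2 : ∀ f : V → ZMod 2, ψ f = ∑ v, f v * ψ (Pi.single v 1) := by
    intro f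
    conv_lhs => rw [pi_eq_sum_univ' f]
    rw [map_sum]
    refine Finset.sum_congr rfl fun v _ => ?_
    rw [map_smul, smul_eq_mul]
  have h3 : φ (Pi.single e 1) = ψ (bd G (Pi.single e 1)) := by rw [← hψ]; rfl
  have h4 : φ (Pi.single e 1) = x e := by
    show ∑ e', (Pi.single e 1 : G.edgeSet → ZMod 2) e' * x e' = x e
    simp [Pi.single_apply]
  rw [← h4, h3, h2, ← aux_adj]
  simp [Pi.single_apply]

theorem aux_cobd_one (G : SimpleGraph V) [Fintype G.edgeSet] :
    cobd G (fun _ => 1) = 0 := by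
  funext ⟨e, he⟩
  induction e using Sym2.ind with
  | _ a b =>
    have hab : a ≠ b := by
      rintro rfl
      exact G.loopless.irrefl _ he
    simp only [cobd, LinearMap.coe_mk, AddHom.coe_mk, Sym2.mem_iff, Pi.zero_apply]
    rw [← Finset.sum_filter]
    have : (Finset.univ.filter fun v => v = a ∨ v = b) = {a, b} := by ext; simp
    rw [this, Finset.sum_pair hab]
    decide

theorem aux_zmod (a : ZMod 2) (h : a ≠ 0) : a = 1 := by
  revert a; decide

theorem aux_add_self (a : ZMod 2) : a + a = 0 := by
  revert a; decide

theorem aux_cut (G : SimpleGraph V) [Fintype G.edgeSet] (c : V → ZMod 2) (e : G.edgeSet)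
    (h : (Finset.univ.filter (fun v => v ∈ (e : Sym2 V) ∧
      v ∈ Finset.univ.filter (fun v => c v ≠ 0))).card = 1) : cobd G c e ≠ 0 := by
  have : cobd G c e = ((Finset.univ.filter (fun v => v ∈ (e : Sym2 V) ∧
      v ∈ Finset.univ.filter (fun v => c v ≠ 0))).card : ZMod 2) := by
    simp only [cobd, LinearMap.coe_mk, AddHom.coe_mk, Finset.card_filter, Nat.cast_sum]
    refine Finset.sum_congr rfl fun v _ => ?_
    by_cases h1 : v ∈ (e : Sym2 V) <;> by_cases h2 : c v = 0 <;> simp [h1, h2]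
    exact aux_zmod _ h2
  rw [this, h]
  decide

theorem aux_half (G : SimpleGraph V) [Fintype G.edgeSet] (x : G.edgeSet → ZMod 2)
    (hx : ∃ c, cobd G c = x) : ∃ c, cobd G c = x ∧
      2 * (Finset.univ.filter (fun v => c v ≠ 0)).card ≤ Fintype.card V := by
  obtain ⟨c, hc⟩ := hx
  by_cases h : 2 * (Finset.univ.filter (fun v => c v ≠ 0)).card ≤ Fintype.card V
  · exact ⟨c, hc, h⟩
  refine ⟨c + fun _ => 1, by rw [map_add, aux_cobd_one, hc, add_zero], ?_⟩
  have h1 : (Finset.univ.filter (fun v => (c + fun _ => (1 : ZMod 2) : V → ZMod 2) v ≠ 0))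
      = Finset.univ.filter (fun v => ¬ c v ≠ 0) := by
    ext v
    simp only [Finset.mem_filter, Finset.mem_univ, true_and, Pi.add_apply]
    generalize c v = a
    revert a; decide
  have h2 := Finset.card_filter_add_card_filter_not (s := (Finset.univ : Finset V))
    (fun v => c v ≠ 0)
  rw [Finset.card_univ] at h2
  rw [h1]
  omega

theorem aux_weight {α β : Type*} [Fintype α] [Fintype β] (w : α ⊕ β → ZMod 2) :
    (Finset.univ.filter (fun j => w j ≠ 0)).card =
      (Finset.univ.filter (fun j => w (Sum.inl j) ≠ 0)).card +
      (Finset.univ.filter (fun j => w (Sum.inr j) ≠ 0)).card := by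
  simp only [Finset.card_filter, Fintype.sum_sum_type]

/-- **Space distance of the deformed code.** Let `d` be the distance of the
original CSS code (i.e. a lower bound on the Hamming weight of every original logical), and
let `h ≥ 0` satisfy a Cheeger-type expansion bound for `G`: every nonempty `S ⊆ V` with
`2|S| ≤ |V|` has at least `h·|S|` edges with exactly one endpoint in `S`. Then every
logical operator of the deformed code (X-type or Z-type) has Hamming weight at least
`min(1, h)·d`, i.e. `d' ≥ min(h(G), 1)·d`. -/
theorem deformed_code_space_distance {n : ℕ} {rX rZ rN : Type*}
    [Fintype rX] [Fintype rZ] [Fintype rN]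
    (HX : Matrix rX (Fin n) (ZMod 2)) (HZ : Matrix rZ (Fin n) (ZMod 2))
    (hCSS : HX * HZ.transpose = 0)
    (ℓ : Fin n → ZMod 2) (hℓZ : HZ.mulVec ℓ = 0)
    (hℓX : ℓ ∉ LinearMap.range HX.vecMulLinear)
    (G : SimpleGraph {i : Fin n // ℓ i = 1}) [Fintype G.edgeSet] (hG : G.Connected)
    (γ : rZ → G.edgeSet → ZMod 2)
    (hγ : ∀ z : rZ, bd G (γ z) = fun v => HZ z v.1)
    (N : rN → G.edgeSet → ZMod 2)
    (hN0 : ∀ p : rN, bd G (N p) = 0)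
    (hNli : LinearIndependent (ZMod 2) N)
    (hNspan : ∀ y : G.edgeSet → ZMod 2, bd G y = 0 →
      y ∈ Submodule.span (ZMod 2) (Set.range N))
    (d : ℕ)
    (hd : ∀ w : Fin n → ZMod 2,
      ((HZ.mulVec w = 0 ∧ w ∉ LinearMap.range HX.vecMulLinear) ∨
       (HX.mulVec w = 0 ∧ w ∉ LinearMap.range HZ.vecMulLinear)) →
      d ≤ (Finset.univ.filter (fun i => w i ≠ 0)).card)
    (h : ℝ) (hh : 0 ≤ h)
    (hexp : ∀ S : Finset {i : Fin n // ℓ i = 1}, S.Nonempty →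
      2 * S.card ≤ Fintype.card {i : Fin n // ℓ i = 1} →
      h * S.card ≤
        ((Finset.univ.filter (fun e : G.edgeSet =>
          (Finset.univ.filter (fun v => v ∈ (e : Sym2 {i : Fin n // ℓ i = 1}) ∧ v ∈ S)).card
            = 1)).card : ℝ)) :
    ∀ w : (Fin n ⊕ G.edgeSet) → ZMod 2,
      (((deformedHZ HZ G γ N).mulVec w = 0 ∧
          w ∉ LinearMap.range (deformedHX HX G).vecMulLinear) ∨
       ((deformedHX HX G).mulVec w = 0 ∧
          w ∉ LinearMap.range (deformedHZ HZ G γ N).vecMulLinear)) →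
      min 1 h * d ≤ ((Finset.univ.filter (fun j => w j ≠ 0)).card : ℝ) := by
  intro w hw
  have hm1 : min 1 h ≤ 1 := min_le_left _ _
  have hm2 : min 1 h ≤ h := min_le_right _ _
  have hm0 : 0 ≤ min 1 h := le_min zero_le_one hh
  rw [aux_weight, Nat.cast_add]
  set A := (Finset.univ.filter (fun j => w (Sum.inl j) ≠ 0)).card with hA
  set B := (Finset.univ.filter (fun j => w (Sum.inr j) ≠ 0)).card with hB
  have hA0 : (0 : ℝ) ≤ A := Nat.cast_nonneg _
  have hB0 : (0 : ℝ) ≤ B := Nat.cast_nonneg _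
  rcases hw with ⟨hw1, hw2⟩ | ⟨hw1, hw2⟩
  · have hN : ∀ p, ∑ e, N p e * w (Sum.inr e) = 0 := by
      intro p
      have := congrFun hw1 (Sum.inr p)
      simpa [deformedHZ, Matrix.mulVec, dotProduct] using this
    have hZ : ∀ z, ∑ i, HZ z i * w (Sum.inl i) + ∑ e, γ z e * w (Sum.inr e) = 0 := by
      intro z
      have := congrFun hw1 (Sum.inl z)
      simpa [deformedHZ, Matrix.mulVec, dotProduct] using this
    have hcyc : ∀ y, bd G y = 0 → ∑ e, y e * w (Sum.inr e) = 0 := by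
      intro y hy
      have hy' := hNspan y hy
      clear hy
      induction hy' using Submodule.span_induction with
      | mem x hx => obtain ⟨p, rfl⟩ := hx; exact hN p
      | zero => simp
      | add a b _ _ ha hb => simp [add_mul, Finset.sum_add_distrib, ha, hb]
      | smul r a _ ha => simp [mul_assoc, ← Finset.mul_sum, ha]
    obtain ⟨c, hc, hcV⟩ := aux_half G _ (aux_exact G _ hcyc)
    set S := (Finset.univ.filter (fun v => c v ≠ 0)) with hS
    let t : Fin n → ZMod 2 := fun i => ∑ v, c v * if i = v.1 then 1 else 0
    have ht : ∀ f : Fin n → ZMod 2, ∑ i, f i * t i = ∑ v, f v.1 * c v := by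
      intro f
      simp only [t, Finset.mul_sum]
      rw [Finset.sum_comm]
      refine Finset.sum_congr rfl fun v _ => ?_
      simp
    have hlog : d ≤ (Finset.univ.filter
        (fun i => ((fun i => w (Sum.inl i)) + t) i ≠ 0)).card := by
      apply hd
      left
      constructor
      · funext z
        have h1 := hZ z
        have h2 := aux_adj G (γ z) c
        rw [hc, hγ] at h2
        rw [h2, ← ht (HZ z), ← Finset.sum_add_distrib] at h1
        simpa [Matrix.mulVec, dotProduct, mul_add] using h1
      · rintro ⟨a, ha⟩
        apply hw2
        refine ⟨Sum.elim a c, ?_⟩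
        funext j
        rcases j with i | e
        · have h1 := congrFun ha i
          simp only [Matrix.vecMulLinear_apply, Matrix.vecMul, dotProduct, Pi.add_apply] at h1
          simp only [Matrix.vecMulLinear_apply, Matrix.vecMul, dotProduct, deformedHX,
            Fintype.sum_sum_type, Matrix.of_apply, Sum.elim_inl, Sum.elim_inr, gaussRow]
          rw [h1, add_assoc]
          show _ + (t i + t i) = _
          rw [aux_add_self, add_zero]
        · simp only [Matrix.vecMulLinear_apply, Matrix.vecMul, dotProduct, deformedHX,
            Fintype.sum_sum_type, Matrix.of_apply, Sum.elim_inl, Sum.elim_inr, gaussRow]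
          rw [← congrFun hc e]
          simp only [Pi.zero_apply, mul_zero, Finset.sum_const_zero, zero_add, cobd,
            LinearMap.coe_mk, AddHom.coe_mk]
          refine Finset.sum_congr rfl fun v _ => ?_
          have h5 : ∀ x, (if x ∈ (e : Sym2 {i : Fin n // ℓ i = 1}) then
              (if x = v then (1 : ZMod 2) else 0) else 0) =
              if x = v then (if v ∈ (e : Sym2 {i : Fin n // ℓ i = 1}) then 1 else 0) else 0 := by
            intro x
            by_cases hx : x = v
            · subst hx; simp
            · simp [hx]
          simp only [h5, Finset.sum_ite_eq', Finset.mem_univ, if_true]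
          split <;> simp
    have hcard : (Finset.univ.filter
        (fun i => ((fun i => w (Sum.inl i)) + t) i ≠ 0)).card ≤ A + S.card := by
      have hsub : (Finset.univ.filter (fun i => ((fun i => w (Sum.inl i)) + t) i ≠ 0)) ⊆
          (Finset.univ.filter (fun j => w (Sum.inl j) ≠ 0)) ∪ S.image Subtype.val := by
        intro i hi
        by_contra hcon
        simp only [Finset.mem_union, Finset.mem_filter, Finset.mem_univ, true_and, not_or,
          not_not, Finset.mem_image, hS, not_exists, not_and] at hcon
        simp only [Finset.mem_filter, Finset.mem_univ, true_and, Pi.add_apply] at hi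
        apply hi
        rw [hcon.1, zero_add]
        refine Finset.sum_eq_zero fun v _ => ?_
        by_cases hv : c v = 0
        · simp [hv]
        · rw [if_neg (fun h => hcon.2 v hv h.symm), mul_zero]
      exact (Finset.card_le_card hsub).trans
        ((Finset.card_union_le _ _).trans (Nat.add_le_add_left Finset.card_image_le _))
    have hdle : (d : ℝ) ≤ A + S.card := by exact_mod_cast hlog.trans hcard
    have hSB : h * S.card ≤ B := by
      rcases S.eq_empty_or_nonempty with h0 | h0
      · rw [h0]; simpa using hB0
      · refine (hexp S h0 hcV).trans ?_
        rw [hB]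
        norm_cast
        refine Finset.card_le_card ?_
        intro e he
        simp only [Finset.mem_filter, Finset.mem_univ, true_and] at he ⊢
        rw [← congrFun hc e]
        exact aux_cut G c e he
    have hS0 : (0 : ℝ) ≤ S.card := Nat.cast_nonneg _
    nlinarith [mul_le_mul_of_nonneg_left hdle hm0, mul_le_mul_of_nonneg_right hm1 hA0,
      mul_le_mul_of_nonneg_right hm2 hS0]
  · have hlog : d ≤ A := by
      apply hd (fun i => w (Sum.inl i))
      right
      constructor
      · funext j
        have := congrFun hw1 (Sum.inl j)
        simpa [deformedHX, Matrix.mulVec, dotProduct] using this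
      · rintro ⟨a, ha⟩
        apply hw2
        have hg : ∀ v, w (Sum.inl v.1) + bd G (fun e => w (Sum.inr e)) v = 0 := by
          intro v
          have h1 := congrFun hw1 (Sum.inr v)
          have h2 := aux_adj G (fun e => w (Sum.inr e)) (fun x => if x = v then 1 else 0)
          simp only [Matrix.mulVec, dotProduct, deformedHX,
            Fintype.sum_sum_type, Matrix.of_apply, Sum.elim_inl, Sum.elim_inr, gaussRow] at h1
          simp only [mul_comm (cobd _ _ _)] at h1
          rw [h2] at h1
          simpa using h1
        have hk : bd G ((fun e => w (Sum.inr e)) + ∑ z, a z • γ z) = 0 := by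
          funext v
          rw [map_add, map_sum, Pi.add_apply, Finset.sum_apply]
          have h1 := congrFun ha v.1
          simp only [Matrix.vecMulLinear_apply, Matrix.vecMul, dotProduct] at h1
          simp only [map_smul, hγ, Pi.smul_apply, smul_eq_mul]
          rw [h1, add_comm]
          exact hg v
        obtain ⟨b, hb⟩ := (Submodule.mem_span_range_iff_exists_fun _).1 (hNspan _ hk)
        refine ⟨Sum.elim a b, ?_⟩
        funext j
        rcases j with i | e
        · have h1 := congrFun ha i
          simpa [Matrix.vecMul, dotProduct, deformedHZ] using h1
        · have h1 := congrFun hb e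
          simp only [Finset.sum_apply, Pi.add_apply, Pi.smul_apply, smul_eq_mul] at h1
          simp only [Matrix.vecMulLinear_apply, Matrix.vecMul, dotProduct, deformedHZ,
            Fintype.sum_sum_type, Matrix.of_apply, Sum.elim_inl, Sum.elim_inr]
          rw [h1, add_comm, add_assoc, aux_add_self, add_zero]
    have hdle : (d : ℝ) ≤ A := by exact_mod_cast hlog
    have hd0 : (0 : ℝ) ≤ d := Nat.cast_nonneg _
    nlinarith [mul_le_mul_of_nonneg_right hm1 hd0]
end
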